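/- In the abstract monotone Galerkin framework, let f ∈ H, let (V_ℓ)_{ℓ ∈ ℕ} be a sequence of closed subspaces of H with V_ℓ ⊆ V_{ℓ+1} for all ℓ, and let V_∞ be the topological closure of ⋃_ℓ V_ℓ. Suppose that for each ℓ, u_ℓ ∈ V_ℓ satisfies a u_ℓ v = ⟪f, v⟫ for all v ∈ V_ℓ, and that u_∞ ∈ V_∞ satisfies a u_∞ v = ⟪f, v⟫ for all v ∈ V_∞. Then ‖u_∞ − u_ℓ‖ → 0 as ℓ → ∞. -/

import Mathlib

open RealInnerProductSpace

/-!
If `u'` is the Galerkin approximation of `u` in `V` and `v ∈ V`, then `v - u' ∈ V` is an admissible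
test vector, so Galerkin orthogonality replaces `a u'` by `a u` in the monotonicity estimate for
`v` and `u'`:
`α ‖v - u'‖² ≤ (a v - a u') (v - u') = (a v - a u) (v - u') ≤ ‖a v - a u‖ ‖v - u'‖`.
Hence `‖u - u'‖ ≤ ‖u - v‖ + α⁻¹ ‖a v - a u‖`, and the right-hand side is small once `v` is
close to `u`, by continuity of `a` at `u`.
-/

open Filter Topology

theorem tendsto_zero_of_mem_closure_iUnion {ι X : Type*} [Preorder ι] [TopologicalSpace X]
    {S : ι → Set X} (hS : Monotone S) {x : X} (hx : x ∈ closure (⋃ i, S i))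
    {φ : X → ℝ} (hφ : Tendsto φ (𝓝 x) (𝓝 0))
    {e : ι → ℝ} (he₀ : ∀ i, 0 ≤ e i) (he : ∀ i, ∀ y ∈ S i, e i ≤ φ y) :
    Tendsto e atTop (𝓝 0) := by
  refine tendsto_order.2 ⟨fun r hr => .of_forall fun i => hr.trans_le (he₀ i), fun ε hε => ?_⟩
  obtain ⟨y, hyε, hy⟩ := mem_closure_iff_nhds.1 hx _ (hφ.eventually_lt_const hε)
  obtain ⟨i, hyi⟩ := Set.mem_iUnion.1 hy
  filter_upwards [eventually_ge_atTop i] with j hij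
  exact (he j y (hS hij hyi)).trans_lt hyε

theorem continuousAt_of_norm_apply_sub_le {𝕜 X E F : Type*} [NontriviallyNormedField 𝕜]
    [TopologicalSpace X] [SeminormedAddCommGroup E] [NormedSpace 𝕜 E]
    [SeminormedAddCommGroup F] [NormedSpace 𝕜 F] {a : X → E →L[𝕜] F} {x : X}
    {k : X → ℝ} (hk₀ : ∀ y, 0 ≤ k y) (hk : Tendsto k (𝓝 x) (𝓝 0))
    (ha : ∀ y v, ‖a y v - a x v‖ ≤ k y * ‖v‖) : ContinuousAt a x :=
  tendsto_iff_norm_sub_tendsto_zero.2 <|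
    squeeze_zero (fun _ => norm_nonneg _) (fun y => (a y - a x).opNorm_le_bound (hk₀ y) (ha y)) hk

section Galerkin

variable {H : Type*} [SeminormedAddCommGroup H] [NormedSpace ℝ H]

/-- Strong monotonicity, with constant `α`, of an operator from `H` to its dual. -/
def IsStronglyMonotone (α : ℝ) (a : H → H →L[ℝ] ℝ) : Prop :=
  ∀ w v, α * ‖w - v‖ ^ 2 ≤ a w (w - v) - a v (w - v)

/-- `u'` is a Galerkin approximation of `u` in `V`. The right-hand side of the variational problem
does not appear: it is the functional `a u`, and being a Galerkin solution in `V` is expressed by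
Galerkin orthogonality. -/
structure IsGalerkinApproximation (a : H → H →L[ℝ] ℝ) (V : Submodule ℝ H) (u u' : H) : Prop where
  mem : u' ∈ V
  orthogonality : ∀ v ∈ V, a u' v = a u v

namespace IsGalerkinApproximation

variable {α : ℝ} {a : H → H →L[ℝ] ℝ} {V : Submodule ℝ H} {u u' v : H}

theorem mul_norm_sub_le (h : IsGalerkinApproximation a V u u') (ha : IsStronglyMonotone α a)
    (hv : v ∈ V) : α * ‖v - u'‖ ≤ ‖a v - a u‖ := by
  have energy : α * ‖v - u'‖ * ‖v - u'‖ ≤ ‖a v - a u‖ * ‖v - u'‖ := calc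
    α * ‖v - u'‖ * ‖v - u'‖ = α * ‖v - u'‖ ^ 2 := by ring
    _ ≤ a v (v - u') - a u' (v - u') := ha v u'
    _ = (a v - a u) (v - u') := by
      rw [h.orthogonality _ (V.sub_mem hv h.mem), sub_apply]
    _ ≤ ‖a v - a u‖ * ‖v - u'‖ := (le_abs_self _).trans ((a v - a u).le_opNorm _)
  obtain h₀ | hpos := (norm_nonneg (v - u')).eq_or_lt
  · simp [← h₀]
  · exact le_of_mul_le_mul_right energy hpos

theorem norm_sub_le (h : IsGalerkinApproximation a V u u') (hα : 0 < α)
    (ha : IsStronglyMonotone α a) (hv : v ∈ V) :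
    ‖u - u'‖ ≤ ‖u - v‖ + α⁻¹ * ‖a v - a u‖ := calc
  ‖u - u'‖ ≤ ‖u - v‖ + ‖v - u'‖ := norm_sub_le_norm_sub_add_norm_sub u v u'
  _ ≤ ‖u - v‖ + α⁻¹ * ‖a v - a u‖ := by
    gcongr
    exact (le_inv_mul_iff₀ hα).2 (h.mul_norm_sub_le ha hv)

end IsGalerkinApproximation

theorem monotone_galerkin_limit_convergence_general {ι : Type*} [Preorder ι]
    {α : ℝ} (hα : 0 < α) {a : H → H →L[ℝ] ℝ} (ha : IsStronglyMonotone α a)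
    {uinf : H} (hcont : ContinuousAt a uinf)
    {V : ι → Submodule ℝ H} (hV : Monotone V) (huinf : uinf ∈ closure (⋃ ℓ, (V ℓ : Set H)))
    {u : ι → H} (hu : ∀ ℓ, IsGalerkinApproximation a (V ℓ) uinf (u ℓ)) :
    Tendsto (fun ℓ => ‖uinf - u ℓ‖) atTop (𝓝 0) := by
  have bound_tendsto :
      Tendsto (fun v => ‖uinf - v‖ + α⁻¹ * ‖a v - a uinf‖) (𝓝 uinf) (𝓝 0) := by
    have : ContinuousAt (fun v => ‖uinf - v‖ + α⁻¹ * ‖a v - a uinf‖) uinf := by fun_prop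
    simpa [ContinuousAt] using this
  exact tendsto_zero_of_mem_closure_iUnion (fun _ _ hij => hV hij) huinf bound_tendsto
    (fun _ => norm_nonneg _) (fun ℓ _ hv => (hu ℓ).norm_sub_le hα ha hv)

end Galerkin

/-- convergence of Galerkin solutions on nested subspaces to the
Galerkin solution on the closure of their union, in the abstract monotone
framework. -/
theorem monotone_galerkin_limit_convergence
    {H : Type*} [NormedAddCommGroup H] [InnerProductSpace ℝ H] [CompleteSpace H]
    (a : H → H →L[ℝ] ℝ) (L₀ : ℝ) (hL₀ : 0 < L₀)
    (hmono : ∀ w v : H, ‖w - v‖ ^ 2 ≤ a w (w - v) - a v (w - v))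
    (hlip : ∀ z w v : H,
      |a z v - a w v| ≤ L₀ * (1 + ‖z‖ ^ 2 + ‖w‖ ^ 2) * ‖z - w‖ * ‖v‖)
    (hzero : ∀ v : H, a 0 v = 0)
    (f : H) (V : ℕ → Submodule ℝ H)
    (hclosed : ∀ ℓ, IsClosed ((V ℓ : Set H)))
    (hnested : ∀ ℓ, V ℓ ≤ V (ℓ + 1))
    (Vinf : Submodule ℝ H)
    (hVinf : (Vinf : Set H) = closure (⋃ ℓ, (V ℓ : Set H)))
    (u : ℕ → H) (hu : ∀ ℓ, u ℓ ∈ V ℓ)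
    (hu' : ∀ ℓ, ∀ v ∈ V ℓ, a (u ℓ) v = ⟪f, v⟫)
    (uinf : H) (huinf : uinf ∈ Vinf)
    (huinf' : ∀ v ∈ Vinf, a uinf v = ⟪f, v⟫) :
    Filter.Tendsto (fun ℓ => ‖uinf - u ℓ‖) Filter.atTop (nhds 0) := by
  have hcont : ContinuousAt a uinf := by
    have hk : Continuous fun z => L₀ * (1 + ‖z‖ ^ 2 + ‖uinf‖ ^ 2) * ‖z - uinf‖ := by fun_prop
    exact continuousAt_of_norm_apply_sub_le (fun _ => by positivity)
      (by simpa using hk.tendsto uinf) (fun z v => hlip z uinf v)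
  have hsub : ∀ ℓ, (V ℓ : Set H) ⊆ Vinf := fun ℓ =>
    hVinf ▸ (Set.subset_iUnion (fun ℓ => (V ℓ : Set H)) ℓ).trans subset_closure
  exact monotone_galerkin_limit_convergence_general one_pos
    (fun w v => by simpa only [one_mul] using hmono w v) hcont (monotone_nat_of_le_succ hnested)
    (hVinf ▸ huinf) fun ℓ =>
      ⟨hu ℓ, fun v hv => (hu' ℓ v hv).trans (huinf' v (hsub ℓ hv)).symm⟩
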